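/- Let G be a finite abelian group and A, B, C ⊆ G nonempty sets with (A + B) ∩ C = ∅. Let H = {x ∈ G : A + B + x = A + B} be the stabilizer of A + B. Then |C| ≤ |G| − |A| − |B| + |H|. -/

import Mathlib

open scoped Pointwise

/-!
This is Kneser's theorem in the form `|A| + |B| ≤ κ(A + B)`, where `κ(C) = |C| + |stab C|`.

* Each `c ∈ A + B` lies in some `C ⊆ A + B` with `|A| + |B| ≤ κ(C)`, because Dyson transforms
  preserve `|A| + |B|` and shrink `B` until a translate of `B` stabilizes `A`.
* `min (κ(C)) (κ(D)) ≤ κ(C ∪ D)`, so the sets covering `A + B` can be merged one by one. Suppose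
  `0 ∈ D \ C`, and let `H` and `K` be the stabilizers of `C` and `D`. Then `D \ C` contains
  `(H ∩ D) + (K \ C)`, and every element of this sumset has at most `|H ∩ K|` representations;
  `C \ D` is treated in the same way.
-/

open AddAction Finset

section Kneser

variable {G : Type*} [AddCommGroup G]

lemma card_le_natCard_of_coe_subset {H : AddSubgroup G} [Finite H] {S : Finset G}
    (hS : (S : Set G) ⊆ H) : #S ≤ Nat.card H := by
  rw [← Set.ncard_coe_finset, ← SetLike.coe_sort_coe, Nat.card_coe_set_eq]
  exact Set.ncard_le_ncard hS (Set.toFinite _)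

variable [DecidableEq G]

lemma finite_stabilizer_of_nonempty {C : Finset G} (hC : C.Nonempty) :
    Finite (stabilizer G C) := by
  rw [← stabilizer_coe_finset]
  exact (stabilizer_finite hC C.finite_toSet).to_subtype

lemma natCard_le_card_of_le_stabilizer {H : AddSubgroup G} {S : Finset G} (hS : S.Nonempty)
    (hH : H ≤ stabilizer G S) : Nat.card H ≤ #S := by
  obtain ⟨s, hs⟩ := hS
  have hsub : s +ᵥ (H : Set G) ⊆ S := by
    rw [← stabilizer_coe_finset] at hH
    exact (Set.vadd_set_mono hH).trans (vadd_set_stabilizer_subset hs)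
  rw [← Set.ncard_coe_finset, ← SetLike.coe_sort_coe, Nat.card_coe_set_eq, ← Set.ncard_vadd_set s]
  exact Set.ncard_le_ncard hsub

lemma addConvolution_le_natCard_inf {H₁ H₂ : AddSubgroup G} [Finite ↥(H₁ ⊓ H₂)]
    {S T : Finset G} (hS : (S : Set G) ⊆ H₁) (hT : (T : Set G) ⊆ H₂) (x : G) :
    S.addConvolution T x ≤ Nat.card ↥(H₁ ⊓ H₂) := by
  rw [← card_inter_vadd_neg]
  obtain hempty | ⟨s, hs⟩ := (S ∩ (x +ᵥ -T)).eq_empty_or_nonempty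
  · simp [hempty]
  have mem_fiber {y : G} (hy : y ∈ S ∩ (x +ᵥ -T)) : y ∈ H₁ ∧ x - y ∈ H₂ := by
    obtain ⟨hyS, hyT⟩ := mem_inter.1 hy
    obtain ⟨t, ht, rfl⟩ := mem_vadd_finset.1 hyT
    exact ⟨hS hyS, by simpa using hT (mem_neg'.1 ht)⟩
  rw [← card_vadd_finset (-s)]
  refine card_le_natCard_of_coe_subset fun z hz ↦ ?_
  obtain ⟨y, hy, rfl⟩ := mem_vadd_finset.1 hz
  refine AddSubgroup.mem_inf.2 ⟨H₁.add_mem (H₁.neg_mem (mem_fiber hs).1) (mem_fiber hy).1, ?_⟩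
  convert H₂.sub_mem (mem_fiber hs).2 (mem_fiber hy).2 using 1
  simp only [vadd_eq_add]
  abel

lemma card_mul_card_le_natCard_inf_mul_card_add {H₁ H₂ : AddSubgroup G} [Finite ↥(H₁ ⊓ H₂)]
    {S T : Finset G} (hS : (S : Set G) ⊆ H₁) (hT : (T : Set G) ⊆ H₂) :
    #S * #T ≤ Nat.card ↥(H₁ ⊓ H₂) * #(S + T) := by
  rw [← card_product]
  exact card_le_mul_card_image_of_maps_to (f := fun p : G × G ↦ p.1 + p.2)
    (fun _ hp ↦ add_mem_add (mem_product.1 hp).1 (mem_product.1 hp).2) _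
    fun x _ ↦ addConvolution_le_natCard_inf hS hT x

lemma card_add_card_le_card_add_add_natCard_inf {H₁ H₂ : AddSubgroup G} {S T : Finset G}
    (hS : (S : Set G) ⊆ H₁) (hT : (T : Set G) ⊆ H₂) (hSne : S.Nonempty) (hTne : T.Nonempty)
    (hSstab : H₁ ⊓ H₂ ≤ stabilizer G S) (hTstab : H₁ ⊓ H₂ ≤ stabilizer G T) :
    #S + #T ≤ #(S + T) + Nat.card ↥(H₁ ⊓ H₂) := by
  have : Finite (stabilizer G S) := finite_stabilizer_of_nonempty hSne
  have : Finite ↥(H₁ ⊓ H₂) := Finite.of_injective _ (AddSubgroup.inclusion_injective hSstab)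
  have hmul := card_mul_card_le_natCard_inf_mul_card_add hS hT
  obtain ⟨u, hu⟩ := Nat.exists_eq_add_of_le (natCard_le_card_of_le_stabilizer hSne hSstab)
  obtain ⟨v, hv⟩ := Nat.exists_eq_add_of_le (natCard_le_card_of_le_stabilizer hTne hTstab)
  rw [hu, hv] at hmul ⊢
  refine Nat.le_of_mul_le_mul_left ?_ (Nat.card_pos (α := ↥(H₁ ⊓ H₂)))
  -- This is `(|S| - k) * (|T| - k) ≥ 0` for `k = |H₁ ⊓ H₂|`.
  nlinarith [Nat.zero_le (u * v)]

lemma card_addSubgroup_inter_add_card_addSubgroup_sdiff (H : AddSubgroup G) [Fintype H]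
    (C : Finset G) :
    #((H : Set G).toFinset ∩ C) + #((H : Set G).toFinset \ C) = Nat.card H := by
  rw [card_inter_add_card_sdiff, ← Set.ncard_eq_toFinset_card', ← Nat.card_coe_set_eq,
    SetLike.coe_sort_coe]

section Union

variable {C₁ C₂ : Finset G} {H₁ H₂ : AddSubgroup G}

lemma card_addSubgroup_inter_add_card_addSubgroup_sdiff_le [Fintype H₁] [Fintype H₂]
    (hH₁ : H₁ ≤ stabilizer G C₁) (hH₂ : H₂ ≤ stabilizer G C₂)
    (hne₁ : ((H₁ : Set G).toFinset ∩ C₂).Nonempty)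
    (hne₂ : ((H₂ : Set G).toFinset \ C₁).Nonempty) :
    #((H₁ : Set G).toFinset ∩ C₂) + #((H₂ : Set G).toFinset \ C₁) ≤
      #(C₂ \ C₁) + Nat.card ↥(H₁ ⊓ H₂) := by
  have hadd : (H₁ : Set G).toFinset ∩ C₂ + (H₂ : Set G).toFinset \ C₁ ⊆ C₂ \ C₁ := by
    simp only [add_subset_iff, mem_inter, mem_sdiff, Set.mem_toFinset, SetLike.mem_coe]
    rintro s ⟨hsH, hsC⟩ t ⟨htH, htC⟩
    refine ⟨?_, (mem_stabilizer_finset.1 (hH₁ hsH) t).not.2 htC⟩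
    rw [add_comm]
    exact (mem_stabilizer_finset.1 (hH₂ htH) s).2 hsC
  rw [← stabilizer_coe_finset] at hH₁ hH₂
  have hstab₁ : H₁ ⊓ H₂ ≤ stabilizer G ((H₁ : Set G).toFinset ∩ C₂) := by
    rw [← stabilizer_coe_finset, coe_inter, Set.coe_toFinset]
    exact (inf_le_inf (stabilizer_addSubgroup H₁).ge hH₂).trans
      stabilizer_inf_stabilizer_le_stabilizer_inter
  have hstab₂ : H₁ ⊓ H₂ ≤ stabilizer G ((H₂ : Set G).toFinset \ C₁) := by
    rw [← stabilizer_coe_finset, coe_sdiff, Set.coe_toFinset, inf_comm]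
    exact (inf_le_inf (stabilizer_addSubgroup H₂).ge hH₁).trans
      stabilizer_inf_stabilizer_le_stabilizer_sdiff
  calc
    _ ≤ #((H₁ : Set G).toFinset ∩ C₂ + (H₂ : Set G).toFinset \ C₁) + Nat.card ↥(H₁ ⊓ H₂) :=
      card_add_card_le_card_add_add_natCard_inf (by simp) (by simp)
        hne₁ hne₂ hstab₁ hstab₂
    _ ≤ _ := by gcongr

lemma min_card_add_natCard_le_card_union_of_zero_mem [Finite H₁] [Finite H₂]
    (hH₁ : H₁ ≤ stabilizer G C₁) (hH₂ : H₂ ≤ stabilizer G C₂)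
    (hle : Nat.card H₁ ≤ Nat.card H₂) (h₁ : 0 ∉ C₁) (h₂ : 0 ∈ C₂) :
    min (#C₁ + Nat.card H₁) (#C₂ + Nat.card H₂) ≤ #(C₁ ∪ C₂) + Nat.card ↥(H₁ ⊓ H₂) := by
  have := Fintype.ofFinite H₁
  have := Fintype.ofFinite H₂
  have hsplit₁ := card_addSubgroup_inter_add_card_addSubgroup_sdiff H₁ C₂
  have hsplit₂ := card_addSubgroup_inter_add_card_addSubgroup_sdiff H₂ C₁
  have hunion₁ : #(C₁ \ C₂) + #C₂ = #(C₁ ∪ C₂) := card_sdiff_add_card _ _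
  have hunion₂ : #(C₂ \ C₁) + #C₁ = #(C₁ ∪ C₂) := by rw [card_sdiff_add_card, union_comm]
  obtain hsdiff | hsdiff :=
    le_or_gt #((H₁ : Set G).toFinset \ C₂) #((H₂ : Set G).toFinset \ C₁)
  · have hsum := card_addSubgroup_inter_add_card_addSubgroup_sdiff_le hH₁ hH₂
      ⟨0, by simp [h₂]⟩ ⟨0, by simp [h₁]⟩
    have hH₁card : Nat.card H₁ ≤ #(C₂ \ C₁) + Nat.card ↥(H₁ ⊓ H₂) := by omega
    omega
  · have hne₁ : ((H₁ : Set G).toFinset \ C₂).Nonempty := card_pos.1 (by omega)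
    have hne₂ : ((H₂ : Set G).toFinset ∩ C₁).Nonempty := card_pos.1 (by omega)
    have hsum := card_addSubgroup_inter_add_card_addSubgroup_sdiff_le hH₂ hH₁ hne₂ hne₁
    have hH₂card : Nat.card H₂ ≤ #(C₁ \ C₂) + Nat.card ↥(H₁ ⊓ H₂) := by
      rw [inf_comm]
      omega
    omega

lemma min_card_add_natCard_le_card_union_of_not_subset [Finite H₁] [Finite H₂]
    (hH₁ : H₁ ≤ stabilizer G C₁) (hH₂ : H₂ ≤ stabilizer G C₂)
    (hle : Nat.card H₁ ≤ Nat.card H₂) (hsub : ¬ C₂ ⊆ C₁) :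
    min (#C₁ + Nat.card H₁) (#C₂ + Nat.card H₂) ≤ #(C₁ ∪ C₂) + Nat.card ↥(H₁ ⊓ H₂) := by
  obtain ⟨c, hc₂, hc₁⟩ := not_subset.1 hsub
  rw [← stabilizer_vadd_eq_right (-c)] at hH₁ hH₂
  have h := min_card_add_natCard_le_card_union_of_zero_mem hH₁ hH₂ hle
    (by simpa [mem_neg_vadd_finset_iff] using hc₁) (by simpa [mem_neg_vadd_finset_iff] using hc₂)
  simpa only [← vadd_finset_union, card_vadd_finset] using h

end Union

lemma stabilizer_inf_stabilizer_le_stabilizer_finset_union (C₁ C₂ : Finset G) :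
    stabilizer G C₁ ⊓ stabilizer G C₂ ≤ stabilizer G (C₁ ∪ C₂) := by
  simp only [← stabilizer_coe_finset, coe_union]
  exact stabilizer_inf_stabilizer_le_stabilizer_union

theorem min_card_add_natCard_stabilizer_le_card_union (C₁ C₂ : Finset G) :
    min (#C₁ + Nat.card (stabilizer G C₁)) (#C₂ + Nat.card (stabilizer G C₂)) ≤
      #(C₁ ∪ C₂) + Nat.card (stabilizer G (C₁ ∪ C₂)) := by
  wlog hle : Nat.card (stabilizer G C₁) ≤ Nat.card (stabilizer G C₂) generalizing C₁ C₂
  · rw [min_comm, union_comm]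
    exact this C₂ C₁ (le_of_not_ge hle)
  by_cases hsub₁ : C₁ ⊆ C₂
  · rw [union_eq_right.2 hsub₁]
    exact min_le_right _ _
  by_cases hsub₂ : C₂ ⊆ C₁
  · rw [union_eq_left.2 hsub₂]
    exact min_le_left _ _
  have hne₁ : C₁.Nonempty := nonempty_of_ne_empty (by rintro rfl; simp at hsub₁)
  have hne₂ : C₂.Nonempty := nonempty_of_ne_empty (by rintro rfl; simp at hsub₂)
  have := finite_stabilizer_of_nonempty hne₁
  have := finite_stabilizer_of_nonempty hne₂
  have := finite_stabilizer_of_nonempty (hne₁.mono (subset_union_left (s₂ := C₂)))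
  calc
    _ ≤ #(C₁ ∪ C₂) + Nat.card ↥(stabilizer G C₁ ⊓ stabilizer G C₂) :=
      min_card_add_natCard_le_card_union_of_not_subset le_rfl le_rfl hle hsub₂
    _ ≤ _ := by
      gcongr
      exact AddSubgroup.card_le_of_le (stabilizer_inf_stabilizer_le_stabilizer_finset_union C₁ C₂)

lemma card_le_natCard_stabilizer_of_vadd_subset {A B : Finset G} {b : G} (hA : A.Nonempty)
    (h : ∀ a ∈ A, (a - b) +ᵥ B ⊆ A) : #B ≤ Nat.card (stabilizer G A) := by
  have := finite_stabilizer_of_nonempty hA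
  rw [← card_vadd_finset (-b)]
  refine card_le_natCard_of_coe_subset fun z hz ↦ mem_stabilizer_finset'.2 fun a ha ↦ ?_
  obtain ⟨y, hy, rfl⟩ := mem_vadd_finset.1 hz
  convert h a ha (vadd_mem_vadd_finset hy) using 1
  simp only [vadd_eq_add]
  abel

lemma exists_subset_add_card_add_card_le {A B : Finset G} {a b : G} (ha : a ∈ A) (hb : b ∈ B) :
    ∃ C ⊆ A + B, a + b ∈ C ∧ #A + #B ≤ #C + Nat.card (stabilizer G C) := by
  induction hn : #B using Nat.strong_induction_on generalizing A B with
  | _ n ih =>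
    subst hn
    by_cases hperiodic : ∀ a' ∈ A, (a' - b) +ᵥ B ⊆ A
    · refine ⟨b +ᵥ A, ?_, ?_, ?_⟩
      · rw [add_comm A B]
        exact vadd_finset_subset_add hb
      · rw [add_comm]
        exact vadd_mem_vadd_finset ha
      · rw [card_vadd_finset, stabilizer_vadd_eq_right]
        gcongr
        exact card_le_natCard_stabilizer_of_vadd_subset ⟨a, ha⟩ hperiodic
    · push Not at hperiodic
      obtain ⟨a', ha', hnot⟩ := hperiodic
      have ha_fst : a ∈ (addDysonETransform (a' - b) (A, B)).1 := mem_union_left _ ha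
      have hb_snd : b ∈ (addDysonETransform (a' - b) (A, B)).2 :=
        mem_inter.2 ⟨hb, mem_neg_vadd_finset_iff.2 (by simpa using ha')⟩
      have hlt : #(addDysonETransform (a' - b) (A, B)).2 < #B := by
        refine card_lt_card (inter_subset_left.ssubset_of_ne fun heq ↦ hnot ?_)
        rw [vadd_finset_subset_iff]
        exact inter_eq_left.1 heq
      obtain ⟨C, hC, habC, hcard⟩ := ih _ hlt ha_fst hb_snd rfl
      rw [addDysonETransform.card] at hcard
      exact ⟨C, hC.trans (addDysonETransform.subset _ _), habC, hcard⟩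

theorem card_add_card_le_card_add_add_natCard_stabilizer {A B : Finset G}
    (hA : A.Nonempty) (hB : B.Nonempty) :
    #A + #B ≤ #(A + B) + Nat.card (stabilizer G (A + B)) := by
  have hcover (c : ↥(A + B)) :
      ∃ C ⊆ A + B, (c : G) ∈ C ∧ #A + #B ≤ #C + Nat.card (stabilizer G C) := by
    obtain ⟨a, ha, b, hb, hab⟩ := mem_add.1 c.2
    exact hab ▸ exists_subset_add_card_add_card_le ha hb
  choose C hsub hmem hcard using hcover
  have hne : (A + B).attach.Nonempty := (hA.add hB).attach
  have hsup : (A + B).attach.sup' hne C = A + B :=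
    (sup'_le hne C fun c _ ↦ hsub c).antisymm fun c hc ↦
      le_sup' C (mem_attach _ ⟨c, hc⟩) (hmem ⟨c, hc⟩)
  rw [← hsup]
  exact sup'_induction hne C
    (p := fun D ↦ #A + #B ≤ #D + Nat.card (stabilizer G D))
    (fun D hD E hE ↦ (le_min hD hE).trans (min_card_add_natCard_stabilizer_le_card_union D E))
    fun c _ ↦ hcard c

lemma natCard_stabilizer_eq_card_filter [Fintype G] (S : Finset G) :
    Nat.card (stabilizer G S) = #{x : G | S.image (fun a ↦ a + x) = S} := by
  rw [Nat.card_eq_fintype_card, Fintype.card_subtype]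
  congr! with x
  simp only [mem_stabilizer_iff, vadd_finset_def, vadd_eq_add, add_comm]

end Kneser

theorem stmt3 {G : Type*} [AddCommGroup G] [Fintype G] [DecidableEq G]
    (A B C : Finset G) (hA : A.Nonempty) (hB : B.Nonempty) (hC : C.Nonempty)
    (hdisj : Disjoint (A + B) C)
    (H : Finset G)
    (hH : H = Finset.univ.filter (fun x : G => Finset.image (fun a => a + x) (A + B) = A + B)) :
    (C.card : ℤ) ≤ (Fintype.card G : ℤ) - A.card - B.card + H.card := by
  have hkneser : #A + #B ≤ #(A + B) + #H := by
    rw [hH, ← natCard_stabilizer_eq_card_filter]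
    exact card_add_card_le_card_add_add_natCard_stabilizer hA hB
  have hpack : #(A + B) + #C ≤ Fintype.card G := by
    rw [← card_union_of_disjoint hdisj]
    exact card_le_univ _
  omega
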